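/- arXiv:1612.07345 — 2 statements merged into one kernel-verified Lean document; each statement's English description precedes it below -/
import Mathlib

section
/- For every finite subset X of L × B, every finite subset Y of L × B, and all x ∈ L, a ∈ B, the following are equivalent: (1) X ⊢ {(x,a)} ∪ Y; (2) X ∪ {(x,b)} ⊢ Y for every b ∈ B with b ≠ a. -/
/-- An entailment relation on a set `S`: a relation between finite subsets of `S`
satisfying reflexivity (R), monotonicity (M) and transitivity/cut (T). -/
def IsEntailment {S : Type*} [DecidableEq S] (E : Finset S → Finset S → Prop) : Prop :=
  (∀ X Y : Finset S, (∃ x, x ∈ X ∧ x ∈ Y) → E X Y) ∧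
  (∀ X X' Y Y' : Finset S, E X Y → E (X ∪ X') (Y ∪ Y')) ∧
  (∀ X Y : Finset S, ∀ z : S, E X (insert z Y) → E (insert z X) Y → E X Y)

variable (M : Type*) (D : Type*) [Lattice M] [BoundedOrder M] [Lattice D] [BoundedOrder D]
  [Fintype D] [DecidableEq M] [DecidableEq D]

/-- The generating axioms (s), (∧), (∨), (0), (1), (t) for the entailment relation
of `D`-valued lattice maps on `M`. -/
def LatticeAxioms : Finset (M × D) → Finset (M × D) → Prop := fun X Y =>
  (∃ x a b, a ≠ b ∧ X = {(x, a), (x, b)} ∧ Y = ∅) ∨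
  (∃ x y a b, X = {(x, a), (y, b)} ∧ Y = {(x ⊓ y, a ⊓ b)}) ∨
  (∃ x y a b, X = {(x, a), (y, b)} ∧ Y = {(x ⊔ y, a ⊔ b)}) ∨
  (X = ∅ ∧ Y = {((⊥ : M), (⊥ : D))}) ∨
  (X = ∅ ∧ Y = {((⊤ : M), (⊤ : D))}) ∨
  (∃ x : M, X = ∅ ∧ Y = Finset.univ.image (fun a : D => (x, a)))

/-- The least entailment relation on `M × D` containing all the generating axioms:
the entailment relation of `D`-valued lattice maps on `M`. -/
def LatticeEntails (X Y : Finset (M × D)) : Prop :=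
  ∀ E : Finset (M × D) → Finset (M × D) → Prop,
    IsEntailment E → (∀ X' Y', LatticeAxioms M D X' Y' → E X' Y') → E X Y

/-!
For fixed `x`, axioms (s) and (t) say that exactly one of the `(x, b)` holds, so `(x, a)` on the
right can be traded for each of the other `(x, b)` on the left: cutting `(x, a)` against
`(x, a), (x, b) ⊢ ∅` gives one direction, and cutting `⊢ {(x, b) : b}` successively against the
given entailments for `b ≠ a` gives the other.
-/

namespace IsEntailment

variable {S : Type*} [DecidableEq S] {E : Finset S → Finset S → Prop} {X X' Y Y' T : Finset S}
  {z : S}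

theorem mono (hE : IsEntailment E) (hX : X ⊆ X') (hY : Y ⊆ Y') (h : E X Y) : E X' Y' := by
  simpa only [Finset.union_eq_right.mpr hX, Finset.union_eq_right.mpr hY]
    using hE.2.1 X X' Y Y' h

theorem cut (hE : IsEntailment E) (hr : E X (insert z Y)) (hl : E (insert z X) Y) : E X Y :=
  hE.2.2 X Y z hr hl

theorem cut_finset (hE : IsEntailment E) (hr : E X (T ∪ Y)) (hl : ∀ w ∈ T, E (insert w X) Y) :
    E X Y := by
  induction T using Finset.induction_on with
  | empty => rwa [Finset.empty_union] at hr
  | insert w T _ ih =>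
    rw [Finset.insert_union] at hr
    obtain ⟨hw, hT⟩ := (Finset.forall_mem_insert _ _ _).mp hl
    exact ih (hE.cut hr (hE.mono subset_rfl Finset.subset_union_right hw)) hT

theorem insert_right_iff_forall_insert_left (hE : IsEntailment E) (hcover : E ∅ (insert z T))
    (hexcl : ∀ w ∈ T, E {z, w} ∅) : E X (insert z Y) ↔ ∀ w ∈ T, E (insert w X) Y := by
  constructor
  · intro h w hw
    have hr : E (insert w X) (insert z Y) := hE.mono (Finset.subset_insert w X) subset_rfl h
    have hl : E (insert z (insert w X)) Y :=
      hE.mono (by grind) (Finset.empty_subset Y) (hexcl w hw)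
    exact hE.cut hr hl
  · intro h
    have hr : E X (T ∪ insert z Y) := hE.mono (Finset.empty_subset X) (by grind) hcover
    exact hE.cut_finset hr fun w hw =>
      hE.mono subset_rfl (Finset.subset_insert z Y) (h w hw)

end IsEntailment

namespace LatticeEntails

theorem isEntailment : IsEntailment (LatticeEntails M D) :=
  ⟨fun X Y h _ hE _ => hE.1 X Y h,
    fun X X' Y Y' h E hE hA => hE.2.1 X X' Y Y' (h E hE hA),
    fun _ _ _ hr hl E hE hA => hE.cut (hr E hE hA) (hl E hE hA)⟩

variable {M D}

theorem of_latticeAxioms {X Y : Finset (M × D)} (h : LatticeAxioms M D X Y) :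
    LatticeEntails M D X Y :=
  fun _ _ hA => hA X Y h

theorem pair_empty_of_ne (x : M) {a b : D} (hab : a ≠ b) :
    LatticeEntails M D {(x, a), (x, b)} ∅ :=
  of_latticeAxioms <| .inl ⟨x, a, b, hab, rfl, rfl⟩

theorem empty_image_univ (x : M) :
    LatticeEntails M D ∅ (Finset.univ.image fun a : D => (x, a)) :=
  of_latticeAxioms <| .inr <| .inr <| .inr <| .inr <| .inr ⟨x, rfl, rfl⟩

end LatticeEntails

theorem stmt3_general {M D : Type*} [Lattice M] [BoundedOrder M] [Lattice D] [BoundedOrder D]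
    [Fintype D] [DecidableEq M] [DecidableEq D] (X Y : Finset (M × D)) (x : M) (a : D) :
    LatticeEntails M D X (insert (x, a) Y) ↔
      ∀ b : D, b ≠ a → LatticeEntails M D (insert (x, b) X) Y := by
  let T : Finset (M × D) := (Finset.univ.erase a).image fun b => (x, b)
  have hcover : LatticeEntails M D ∅ (insert (x, a) T) := by
    rw [← Finset.image_insert (fun b => (x, b)), Finset.insert_erase (Finset.mem_univ a)]
    exact LatticeEntails.empty_image_univ x
  have hexcl : ∀ w ∈ T, LatticeEntails M D {(x, a), w} ∅ :=
    Finset.forall_mem_image.mpr fun _ hb =>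
      LatticeEntails.pair_empty_of_ne x (Finset.ne_of_mem_erase hb).symm
  rw [(LatticeEntails.isEntailment M D).insert_right_iff_forall_insert_left hcover hexcl]
  simp only [T, Finset.forall_mem_image, Finset.mem_erase, Finset.mem_univ, and_true]

theorem stmt3 {L B : Type*} [DistribLattice L] [BoundedOrder L] [BooleanAlgebra B]
    [Fintype B] [DecidableEq L] [DecidableEq B]
    (X Y : Finset (L × B)) (x : L) (a : B) :
    LatticeEntails L B X (insert (x, a) Y) ↔
      ∀ b : B, b ≠ a → LatticeEntails L B (insert (x, b) X) Y :=
  stmt3_general X Y x a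
end

section
/- Let φ : L → L' be a bounded lattice homomorphism between bounded distributive lattices and let B be a finite Boolean algebra with 0_B ≠ 1_B. Let ⊢ and ⊢' be the entailment relations of B-valued lattice maps on L and on L' respectively, and let f_φ(x,a) = (φ(x), a). If f_φ is conservative, i.e. f_φ(X) ⊢' f_φ(Y) implies X ⊢ Y for all finite X, Y ⊆ L × B, then φ is injective. -/
variable (M : Type*) (D : Type*) [Lattice M] [BoundedOrder M] [Lattice D] [BoundedOrder D]
  [Fintype D] [DecidableEq M] [DecidableEq D]

/-!
If `φ x = φ y`, then `(x, ⊤)` and `(y, ⊤)` have the same image under `f_φ`, so reflexivity and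
conservativity give `{(x, ⊤)} ⊢ {(y, ⊤)}`. Entailment is sound for bounded lattice homomorphisms:
each of them sending `x` to `⊤` must send `y` to `⊤`. If `x ≰ y`, a prime ideal containing `y` but
not `x` yields a two-valued homomorphism violating this, so `x ≤ y`, and `y ≤ x` by symmetry.
-/

section Entailment

variable {S T : Type*}

/-- The entailment relation of a valuation `v`: if every member of `X` is true under `v`, then so
is some member of `Y`. -/
def ValuationEntails (v : S → Prop) (X Y : Finset S) : Prop :=
  (∀ s ∈ X, v s) → ∃ s ∈ Y, v s

theorem isEntailment_valuationEntails [DecidableEq S] (v : S → Prop) :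
    IsEntailment (ValuationEntails v) := by
  refine ⟨?reflexivity, ?monotonicity, ?transitivity⟩
  case reflexivity =>
    rintro X Y ⟨s, hsX, hsY⟩ hX
    exact ⟨s, hsY, hX s hsX⟩
  case monotonicity =>
    intro X X' Y Y' hXY hX
    obtain ⟨s, hsY, hs⟩ := hXY fun s hsX => hX s (Finset.mem_union_left X' hsX)
    exact ⟨s, Finset.mem_union_left Y' hsY, hs⟩
  case transitivity =>
    intro X Y z hright hleft hX
    by_cases hz : v z
    · exact hleft ((Finset.forall_mem_insert _ _ _).2 ⟨hz, hX⟩)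
    · exact ((Finset.exists_mem_insert _ _ _).1 (hright hX)).resolve_left hz

theorem IsEntailment.singleton_of_conservative [DecidableEq T]
    {E : Finset S → Finset S → Prop} {E' : Finset T → Finset T → Prop} (hE' : IsEntailment E')
    {f : S → T} (hf : ∀ X Y : Finset S, E' (X.image f) (Y.image f) → E X Y)
    {s t : S} (hst : f s = f t) : E {s} {t} :=
  hf {s} {t} (hE'.1 _ _ ⟨f s, by simp, by simp [hst]⟩)

end Entailment

section LatticeEntails

variable {M D}

theorem isEntailment_latticeEntails : IsEntailment (LatticeEntails M D) :=
  ⟨fun X Y hXY _ hE _ => hE.1 X Y hXY,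
    fun X X' Y Y' hXY E hE hax => hE.2.1 X X' Y Y' (hXY E hE hax),
    fun X Y z hright hleft E hE hax => hE.2.2 X Y z (hright E hE hax) (hleft E hE hax)⟩

theorem LatticeAxioms.valuationEntails {X Y : Finset (M × D)} (hXY : LatticeAxioms M D X Y)
    (h : BoundedLatticeHom M D) : ValuationEntails (fun p => h p.1 = p.2) X Y := by
  intro hX
  rcases hXY with ⟨x, a, b, hab, rfl, rfl⟩ | ⟨x, y, a, b, rfl, rfl⟩ | ⟨x, y, a, b, rfl, rfl⟩ |
    ⟨rfl, rfl⟩ | ⟨rfl, rfl⟩ | ⟨x, rfl, rfl⟩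
  · have ha : h x = a := hX (x, a) (by simp)
    have hb : h x = b := hX (x, b) (by simp)
    exact absurd (ha.symm.trans hb) hab
  · have ha : h x = a := hX (x, a) (by simp)
    have hb : h y = b := hX (y, b) (by simp)
    exact ⟨_, Finset.mem_singleton_self _, by simp only [map_inf, ha, hb]⟩
  · have ha : h x = a := hX (x, a) (by simp)
    have hb : h y = b := hX (y, b) (by simp)
    exact ⟨_, Finset.mem_singleton_self _, by simp only [map_sup, ha, hb]⟩
  · exact ⟨_, Finset.mem_singleton_self _, map_bot h⟩
  · exact ⟨_, Finset.mem_singleton_self _, map_top h⟩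
  · exact ⟨(x, h x), by simp, rfl⟩

theorem LatticeEntails.valuationEntails {X Y : Finset (M × D)} (hXY : LatticeEntails M D X Y)
    (h : BoundedLatticeHom M D) : ValuationEntails (fun p => h p.1 = p.2) X Y :=
  hXY _ (isEntailment_valuationEntails _) fun _ _ hax => hax.valuationEntails h

theorem LatticeEntails.apply_eq_of_singleton {x y : M} {a b : D}
    (hxy : LatticeEntails M D {(x, a)} {(y, b)}) {h : BoundedLatticeHom M D} (hx : h x = a) :
    h y = b := by
  simpa [ValuationEntails, hx] using hxy.valuationEntails h

end LatticeEntails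

section PrimeIdeal

open Order Set

open scoped Classical in
/-- The two-valued bounded lattice homomorphism associated with a prime ideal `J`, sending `J` to
`⊥` and its complement to `⊤`; the codomain may be any bounded lattice. -/
noncomputable def primeIdealHom {L : Type*} [Lattice L] [BoundedOrder L] (D : Type*) [Lattice D]
    [BoundedOrder D] (J : Ideal L) (hJ : J.IsPrime) : BoundedLatticeHom L D where
  toFun z := if z ∈ J then ⊥ else ⊤
  map_sup' a b := by
    by_cases ha : a ∈ J <;> by_cases hb : b ∈ J <;> simp [Ideal.sup_mem_iff, ha, hb]
  map_inf' a b := by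
    have hab : a ⊓ b ∈ J ↔ a ∈ J ∨ b ∈ J :=
      ⟨hJ.mem_or_mem, fun h => h.elim (J.lower inf_le_left) (J.lower inf_le_right)⟩
    by_cases ha : a ∈ J <;> by_cases hb : b ∈ J <;> simp [hab, ha, hb]
  map_top' := if_neg hJ.toIsProper.top_notMem
  map_bot' := if_pos J.bot_mem

variable {L : Type*} [DistribLattice L]

theorem exists_isPrime_mem_notMem_of_not_le {x y : L} (hxy : ¬x ≤ y) :
    ∃ J : Ideal L, J.IsPrime ∧ y ∈ J ∧ x ∉ J := by
  have hdisj : Disjoint (PFilter.principal x : Set L) (Ideal.principal y : Set L) :=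
    disjoint_left.2 fun z hxz hzy =>
      hxy ((PFilter.mem_principal.1 hxz).trans (Ideal.mem_principal.1 hzy))
  obtain ⟨J, hJ, hyJ, hxJ⟩ := DistribLattice.prime_ideal_of_disjoint_filter_ideal hdisj
  exact ⟨J, hJ, Ideal.principal_le_iff.1 hyJ,
    disjoint_left.1 hxJ (PFilter.mem_principal.2 le_rfl)⟩

theorem exists_boundedLatticeHom_of_not_le [BoundedOrder L] (D : Type*) [Lattice D]
    [BoundedOrder D] {x y : L} (hxy : ¬x ≤ y) :
    ∃ h : BoundedLatticeHom L D, h x = ⊤ ∧ h y = ⊥ := by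
  obtain ⟨J, hJ, hyJ, hxJ⟩ := exists_isPrime_mem_notMem_of_not_le hxy
  exact ⟨primeIdealHom D J hJ, if_neg hxJ, if_pos hyJ⟩

end PrimeIdeal

theorem LatticeEntails.le_of_singleton_top {L D : Type*} [DistribLattice L] [BoundedOrder L]
    [Lattice D] [BoundedOrder D] [Fintype D] [Nontrivial D] [DecidableEq L] [DecidableEq D]
    {x y : L} (hxy : LatticeEntails L D {(x, ⊤)} {(y, ⊤)}) : x ≤ y := by
  by_contra hle
  obtain ⟨h, hx, hy⟩ := exists_boundedLatticeHom_of_not_le D hle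
  exact bot_ne_top (hy.symm.trans (hxy.apply_eq_of_singleton hx))

theorem stmt14_general {L L' D : Type*} [DistribLattice L] [BoundedOrder L]
    [Lattice L'] [BoundedOrder L'] [Lattice D] [BoundedOrder D] [Fintype D] [Nontrivial D]
    [DecidableEq L] [DecidableEq L'] [DecidableEq D] (φ : L → L')
    (hcons : ∀ X Y : Finset (L × D),
      LatticeEntails L' D (X.image fun p => (φ p.1, p.2)) (Y.image fun p => (φ p.1, p.2)) →
      LatticeEntails L D X Y) :
    Function.Injective φ := by
  have le_of_map_eq {x y : L} (hxy : φ x = φ y) : x ≤ y :=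
    (isEntailment_latticeEntails.singleton_of_conservative hcons
      (congrArg (·, (⊤ : D)) hxy)).le_of_singleton_top
  exact fun x y hxy => le_antisymm (le_of_map_eq hxy) (le_of_map_eq hxy.symm)

theorem stmt14 {L L' B : Type*} [DistribLattice L] [BoundedOrder L]
    [DistribLattice L'] [BoundedOrder L'] [BooleanAlgebra B] [Fintype B] [Nontrivial B]
    [DecidableEq L] [DecidableEq L'] [DecidableEq B]
    (φ : BoundedLatticeHom L L')
    (hcons : ∀ X Y : Finset (L × B),
      LatticeEntails L' B (X.image fun p => (φ p.1, p.2)) (Y.image fun p => (φ p.1, p.2)) →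
      LatticeEntails L B X Y) :
    Function.Injective φ :=
  stmt14_general φ hcons
end
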